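/- arXiv:1601.00506 — 3 statements merged into one kernel-verified Lean document; each statement's English description precedes it below -/
import Mathlib

section
/- Let T be a finite tree on n ≥ 4 vertices, and let l1 and l2 denote the number of vertices of T of degree 1 and of degree 2, respectively. Then the minimum cardinality of a set F of unordered pairs of distinct vertices of T, not edges of T, such that the graph T + F is 3-vertex-connected, is exactly ⌈(2·l1 + l2)/2⌉; that is, such a set of size ⌈(2·l1 + l2)/2⌉ exists and no smaller set suffices. -/
/-- The degree of a vertex `v` in a simple graph `G`, as the cardinality of its
neighbor set. -/
noncomputable def degN {V : Type*} (G : SimpleGraph V) (v : V) : ℕ :=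
  (G.neighborSet v).ncard

/-- A finite simple graph is 3-vertex-connected if removing any set of at most two
vertices leaves a connected induced subgraph. -/
def ThreeConnected {V : Type*} [Fintype V] (G : SimpleGraph V) : Prop :=
  ∀ S : Finset V, S.card ≤ 2 → (G.induce ((S : Set V)ᶜ)).Connected

/-!
In a `3`-connected graph containing the tree `T` on `n` vertices every vertex `v` has degree at
least `max 3 (deg v)`. Summing over `v` gives a demand of `2n - 2 + 2 l₁ + l₂`. At least half that
many edges are needed, and `T` supplies `n - 1` of them, which leaves `l₁ + l₂ / 2` to be added.

That this bound is attained up to rounding is shown by induction on `n`, suppressing one or two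
vertices of `T`, extending the smaller tree, and subdividing edges of the extension to put the
suppressed vertices back. One vertex reduces the demand by three or four and costs two edges.
It suffices when the demand is odd, where the rounding absorbs the loss and `T` has a vertex of
degree two to suppress, and for a leaf at a vertex of degree at least four. In the remaining trees
on at least six vertices there are two vertices whose successive suppression reduces the demand by
six, namely a leaf and a neighbour of degree three, or two nonadjacent vertices of degree two;
subdividing two edges and joining the new vertices restores both of them for three edges.
-/

namespace TreeAugmentation

open Finset SimpleGraph

section Connectivity

variable {U V : Type*}

theorem connected_of_reachable_map {G' : SimpleGraph U} {G : SimpleGraph V} (hG' : G'.Connected)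
    (f : U → V) (hadj : ∀ u v, G'.Adj u v → G.Reachable (f u) (f v))
    (hf : ∀ v, ∃ u, G.Reachable v (f u)) : G.Connected := by
  have hreach (u v : U) : G.Reachable (f u) (f v) := by
    obtain ⟨p⟩ := hG'.preconnected u v
    induction p with
    | nil => exact .rfl
    | cons h _ ih => exact (hadj _ _ h).trans ih
  obtain ⟨u₀⟩ := hG'.nonempty
  refine connected_iff_exists_forall_reachable G |>.2 ⟨f u₀, fun v ↦ ?_⟩
  obtain ⟨u, hu⟩ := hf v
  exact (hreach u₀ u).trans hu.symm

/-- `G` stays connected (and nonempty) after the deletion of any `k` vertices, so that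
`ThreeConnected` is the case `k = 2`. -/
def SurvivesDeletion (k : ℕ) (G : SimpleGraph V) : Prop :=
  ∀ S : Finset V, #S ≤ k → (G.induce ((S : Set V)ᶜ)).Connected

theorem SurvivesDeletion.mono {k l : ℕ} {G : SimpleGraph V} (hG : SurvivesDeletion l G)
    (hkl : k ≤ l) : SurvivesDeletion k G :=
  fun S hS ↦ hG S (hS.trans hkl)

/-- Deleting an endpoint of an edge also deletes the edge. -/
theorem SurvivesDeletion.reachable_deleteEdges {k : ℕ} {G : SimpleGraph V}
    (hG : SurvivesDeletion (k + 1) G) {S : Finset V} (hS : #S ≤ k) {e : Sym2 V} {c : V} (hc : c ∈ e)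
    (u v : ↥((S : Set V)ᶜ)) (hu : u.1 ≠ c) (hv : v.1 ≠ c) :
    ((G.deleteEdges {e}).induce ((S : Set V)ᶜ)).Reachable u v := by
  classical
  have hconn := hG (insert c S) ((card_insert_le c S).trans (by lia))
  let incl : G.induce (((insert c S : Finset V) : Set V)ᶜ) →g
      (G.deleteEdges {e}).induce ((S : Set V)ᶜ) :=
    { toFun := fun w ↦ ⟨w.1, fun hw ↦ w.2 (by simpa using Or.inr hw)⟩
      map_rel' := by
        rintro ⟨w, hw⟩ ⟨z, hz⟩ h
        simp only [coe_insert, Set.mem_compl_iff, Set.mem_insert_iff, not_or] at hw hz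
        refine deleteEdges_adj.2 ⟨h, ?_⟩
        rintro rfl
        rcases Sym2.mem_iff.1 hc with rfl | rfl
        exacts [hw.1 rfl, hz.1 rfl] }
  have h := hconn.preconnected ⟨u.1, by simpa using ⟨hu, u.2⟩⟩ ⟨v.1, by simpa using ⟨hv, v.2⟩⟩
  exact h.map incl

theorem SurvivesDeletion.deleteEdge [Fintype V] {k : ℕ} {G : SimpleGraph V}
    (hG : SurvivesDeletion (k + 1) G) (hcard : k + 3 ≤ Fintype.card V) (e : Sym2 V) :
    SurvivesDeletion k (G.deleteEdges {e}) := by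
  classical
  induction e with | _ a b
  intro S hS
  rcases eq_or_ne a b with rfl | hab
  · rw [deleteEdges_eq_self.2 (by simp)]
    exact hG S (by lia)
  have hlt : #(insert a (insert b S)) < #(univ : Finset V) :=
    (card_insert_le _ _).trans_lt <| (Nat.succ_le_succ (card_insert_le _ _)).trans_lt <| by
      rw [card_univ]; lia
  obtain ⟨z, -, hz⟩ := exists_mem_notMem_of_card_lt_card hlt
  simp only [mem_insert, not_or] at hz
  refine connected_iff_exists_forall_reachable _ |>.2 ⟨⟨z, by simpa using hz.2.2⟩, fun u ↦ ?_⟩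
  by_cases hu : u.1 = a
  · exact hG.reachable_deleteEdges hS (Sym2.mem_mk_right a b) _ _ hz.2.1 (hu ▸ hab)
  · exact hG.reachable_deleteEdges hS (Sym2.mem_mk_left a b) _ _ hz.1 hu

theorem SurvivesDeletion.deleteEdges [Fintype V] {k : ℕ} {G : SimpleGraph V} (D : Finset (Sym2 V))
    (hG : SurvivesDeletion (k + #D) G) (hcard : k + #D + 2 ≤ Fintype.card V) :
    SurvivesDeletion k (G.deleteEdges D) := by
  classical
  induction D using Finset.induction_on generalizing G with
  | empty => simpa using hG
  | insert e D he ih =>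
    rw [card_insert_of_notMem he] at hG hcard
    rw [coe_insert, Set.insert_eq, ← deleteEdges_deleteEdges]
    exact ih (hG.deleteEdge (k := k + #D) (by lia) e) (by lia)

/-- Every new vertex deleted from `G` costs at most one edge of `G'`, namely the edge `e x` that it
may subdivide. -/
theorem SurvivesDeletion.of_subdivision [Fintype U] {k : ℕ} {G' : SimpleGraph U}
    {G : SimpleGraph V} (hG' : SurvivesDeletion k G') (hcard : k + 2 ≤ Fintype.card U)
    (f : U ↪ V) (e : V → Sym2 U)
    (hadj : ∀ u v, G'.Adj u v → G.Adj (f u) (f v) ∨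
      ∃ x ∉ Set.range f, e x = s(u, v) ∧ G.Adj x (f u) ∧ G.Adj x (f v))
    (hattach : ∀ S : Finset V, #S ≤ k → ∀ x : ↥((S : Set V)ᶜ), x.1 ∉ Set.range f →
      ∃ u, ∃ hu : f u ∉ S, (G.induce ((S : Set V)ᶜ)).Reachable x ⟨f u, by simpa using hu⟩) :
    SurvivesDeletion k G := by
  classical
  intro S hS
  let S' : Finset U := {u | f u ∈ S}
  let D : Finset (Sym2 U) := {x ∈ S | x ∉ Set.range f}.image e
  have hcost : #S' + #D ≤ k := by
    have hS' : #S' ≤ #{x ∈ S | x ∈ Set.range f} :=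
      card_le_card_of_injOn f (fun u hu ↦ by simpa [S'] using hu) f.injective.injOn
    have hD : #D ≤ #{x ∈ S | x ∉ Set.range f} := card_image_le
    have := card_filter_add_card_filter_not (s := S) (· ∈ Set.range f)
    lia
  have hconn : ((G'.deleteEdges D).induce ((S' : Set U)ᶜ)).Connected :=
    (hG'.mono (k := #S' + #D) hcost).deleteEdges D (by lia) S' le_rfl
  refine connected_of_reachable_map hconn
    (fun u ↦ ⟨f u.1, fun h ↦ u.2 (by simpa [S'] using h)⟩) ?_ ?_
  · rintro ⟨u, hu⟩ ⟨v, hv⟩ huv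
    obtain ⟨huv, hDuv⟩ := deleteEdges_adj.1 (induce_adj.1 huv)
    rcases hadj u v huv with h | ⟨x, hx, hex, hxu, hxv⟩
    · exact Adj.reachable (induce_adj.2 h)
    · have hxS : x ∉ S := fun h ↦
        hDuv (hex ▸ mem_coe.2 (mem_image_of_mem e (mem_filter.2 ⟨h, hx⟩)))
      have hx_adj (w) (hw) (h : G.Adj x (f w)) :
          (G.induce ((S : Set V)ᶜ)).Reachable ⟨x, by simpa using hxS⟩ ⟨f w, hw⟩ :=
        Adj.reachable (induce_adj.2 h)
      exact (hx_adj u _ hxu).symm.trans (hx_adj v _ hxv)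
  · intro w
    by_cases hw : w.1 ∈ Set.range f
    · obtain ⟨u, hu⟩ := hw
      refine ⟨⟨u, fun h ↦ w.2 ?_⟩, by simp [hu]⟩
      simpa [S', hu] using h
    · obtain ⟨u, hu, hreach⟩ := hattach S hS w hw
      exact ⟨⟨u, by simpa [S'] using hu⟩, hreach⟩

end Connectivity

section ReplaceEdges

variable {U V : Type*} (f : U ↪ V) {G' : SimpleGraph U} {D : Finset (Sym2 U)} {N : Finset (Sym2 V)}

/-- The graph on `V` obtained from the graph `G'` on `U` by deleting the edges in `D`, embedding the
result along `f` and adding the pairs in `N` as edges. Subdivision of edges of `G'`, with or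
without further edges at the new vertices, is of this form. -/
def replaceEdges (G' : SimpleGraph U) (D : Finset (Sym2 U)) (N : Finset (Sym2 V)) :
    SimpleGraph V :=
  (G'.deleteEdges D).map f ⊔ fromEdgeSet N

theorem ncard_edgeSet_replaceEdges_le [Finite U] (N : Finset (Sym2 V))
    (hD : (D : Set (Sym2 U)) ⊆ G'.edgeSet) :
    (replaceEdges f G' D N).edgeSet.ncard + #D ≤ G'.edgeSet.ncard + #N := by
  have hmap : ((G'.deleteEdges D).map f).edgeSet.ncard ≤ G'.edgeSet.ncard - #D := by
    rw [edgeSet_map, edgeSet_deleteEdges, ← Set.ncard_coe_finset D, ← Set.ncard_sdiff hD]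
    exact Set.ncard_image_le
  have hnew : (fromEdgeSet (N : Set (Sym2 V))).edgeSet.ncard ≤ #N := by
    rw [edgeSet_fromEdgeSet, ← Set.ncard_coe_finset N]
    exact Set.ncard_le_ncard Set.sdiff_subset
  have hle : #D ≤ G'.edgeSet.ncard := Set.ncard_coe_finset D ▸ Set.ncard_le_ncard hD
  rw [replaceEdges, edgeSet_sup]
  have := Set.ncard_union_le ((G'.deleteEdges D).map f).edgeSet
    (fromEdgeSet (N : Set (Sym2 V))).edgeSet
  lia

variable {f}

theorem replaceEdges_adj_of_mem {v w : V} (hN : s(v, w) ∈ N) (hvw : v ≠ w) :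
    (replaceEdges f G' D N).Adj v w :=
  .inr ⟨hN, hvw⟩

theorem replaceEdges_adj_map {u v : U} (huv : G'.Adj u v) (hD : s(u, v) ∉ D) :
    (replaceEdges f G' D N).Adj (f u) (f v) :=
  .inl <| (map_adj_apply (f := f)).2 <| deleteEdges_adj.2 ⟨huv, hD⟩

theorem le_replaceEdges {T : SimpleGraph V} (hle : T.comap f ≤ G')
    (hD : ∀ e ∈ D, e.map f ∉ T.edgeSet)
    (hN : ∀ x ∉ Set.range f, ∀ v, T.Adj x v → s(x, v) ∈ N) : T ≤ replaceEdges f G' D N := by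
  intro v w hvw
  by_cases hv : v ∈ Set.range f
  · by_cases hw : w ∈ Set.range f
    · obtain ⟨⟨u, rfl⟩, u', rfl⟩ := hv, hw
      exact replaceEdges_adj_map (hle hvw) fun h ↦ hD _ h hvw
    · exact (replaceEdges_adj_of_mem (hN w hw v hvw.symm) hvw.ne').symm
  · exact replaceEdges_adj_of_mem (hN v hv w hvw) hvw.ne

theorem exists_reachable_of_card_lt {G : SimpleGraph V} {S : Finset V} (x : ↥((S : Set V)ᶜ))
    {W : Finset U} (hS : #S < #W) (hG : ∀ u ∈ W, G.Adj x (f u)) :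
    ∃ u, ∃ hu : f u ∉ S, (G.induce ((S : Set V)ᶜ)).Reachable x ⟨f u, by simpa using hu⟩ := by
  obtain ⟨v, hv, hvS⟩ := exists_mem_notMem_of_card_lt_card (hS.trans_eq (card_map f).symm)
  obtain ⟨u, hu, rfl⟩ := mem_map.1 hv
  exact ⟨u, hvS, Adj.reachable (induce_adj.2 (hG u hu))⟩

theorem exists_reachable_of_two_neighbors_and_link {G : SimpleGraph V} {S : Finset V} (hS : #S ≤ 2)
    (x : ↥((S : Set V)ᶜ)) {y : V} (hy : y ∉ Set.range f) {a b c d : U} (hab : a ≠ b) (hcd : c ≠ d)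
    (hne : s(a, b) ≠ s(c, d)) (hxy : G.Adj x y) (hx_adj : ∀ u ∈ s(a, b), G.Adj x (f u))
    (hy_adj : ∀ u ∈ s(c, d), G.Adj y (f u)) :
    ∃ u, ∃ hu : f u ∉ S, (G.induce ((S : Set V)ᶜ)).Reachable x ⟨f u, by simpa using hu⟩ := by
  classical
  by_cases hSab : ∃ u ∈ s(a, b), f u ∉ S
  · obtain ⟨u, hu, huS⟩ := hSab
    exact ⟨u, huS, Adj.reachable (induce_adj.2 (hx_adj u hu))⟩
  · push Not at hSab
    have hS_eq : {f a, f b} = S :=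
      eq_of_subset_of_card_le (by simp [insert_subset_iff, hSab])
        (by rwa [card_pair (f.injective.ne hab)])
    have hyS : y ∉ S := by
      rw [← hS_eq, mem_insert, mem_singleton]
      rintro (rfl | rfl) <;> simp at hy
    obtain ⟨u, hu, huS⟩ : ∃ u ∈ s(c, d), f u ∉ S := by
      by_contra! h
      have hc := h c (Sym2.mem_mk_left c d)
      have hd := h d (Sym2.mem_mk_right c d)
      simp only [← hS_eq, mem_insert, mem_singleton, f.injective.eq_iff] at hc hd
      exact hne <| ((Sym2.mem_and_mem_iff hcd).1 ⟨Sym2.mem_iff.2 hc, Sym2.mem_iff.2 hd⟩)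
    exact ⟨u, huS, (Adj.reachable (v := ⟨y, by simpa using hyS⟩) (induce_adj.2 hxy)).trans
      (Adj.reachable (induce_adj.2 (hy_adj u hu)))⟩

variable [Fintype U] [Fintype V]

theorem threeConnected_replaceEdges (hG' : ThreeConnected G') (hcard : 4 ≤ Fintype.card U)
    (e : V → Sym2 U)
    (he : ∀ u v, s(u, v) ∈ D → ∃ x ∉ Set.range f, e x = s(u, v) ∧ s(x, f u) ∈ N ∧ s(x, f v) ∈ N)
    (hattach : ∀ S : Finset V, #S ≤ 2 → ∀ x : ↥((S : Set V)ᶜ), x.1 ∉ Set.range f →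
      ∃ u, ∃ hu : f u ∉ S,
        ((replaceEdges f G' D N).induce ((S : Set V)ᶜ)).Reachable x ⟨f u, by simpa using hu⟩) :
    ThreeConnected (replaceEdges f G' D N) := by
  refine SurvivesDeletion.of_subdivision (k := 2) hG' hcard f e (fun u v huv ↦ ?_) hattach
  by_cases hD : s(u, v) ∈ D
  · obtain ⟨x, hx, hex, hu, hv⟩ := he u v hD
    exact .inr ⟨x, hx, hex, replaceEdges_adj_of_mem hu fun h ↦ hx ⟨u, h.symm⟩,
      replaceEdges_adj_of_mem hv fun h ↦ hx ⟨v, h.symm⟩⟩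
  · exact .inl (replaceEdges_adj_map huv hD)

theorem exists_threeConnected_of_subdivide_one {T : SimpleGraph V} (hG' : ThreeConnected G')
    (hcard : 4 ≤ Fintype.card U) {x : V} (hf : ∀ v, v ∉ Set.range f ↔ v = x) (hle : T.comap f ≤ G')
    {a b c : U} (hab : G'.Adj a b) (hT : ¬T.Adj (f a) (f b)) (hca : c ≠ a) (hcb : c ≠ b)
    (hx : ∀ v, T.Adj x v → v = f a ∨ v = f b ∨ v = f c) :
    ∃ G, T ≤ G ∧ ThreeConnected G ∧ G.edgeSet.ncard ≤ G'.edgeSet.ncard + 2 := by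
  classical
  have hxr : x ∉ Set.range f := (hf x).2 rfl
  have hxf (u : U) : x ≠ f u := fun h ↦ hxr ⟨u, h.symm⟩
  let D : Finset (Sym2 U) := {s(a, b)}
  let W : Finset U := {a, b, c}
  let N : Finset (Sym2 V) := W.image fun u ↦ s(x, f u)
  have hN (u : U) (hu : u ∈ W) : s(x, f u) ∈ N := mem_image_of_mem (fun u ↦ s(x, f u)) hu
  have hW : #W = 3 := card_eq_three.2 ⟨a, b, c, hab.ne, hca.symm, hcb.symm, rfl⟩
  refine ⟨replaceEdges f G' D N, le_replaceEdges hle (by simpa [D] using hT) ?_,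
    threeConnected_replaceEdges hG' hcard (fun _ ↦ s(a, b)) ?_ ?_, ?_⟩
  · rintro v hv w hvw
    obtain rfl := (hf v).1 hv
    rcases hx w hvw with rfl | rfl | rfl
    exacts [hN a (by simp [W]), hN b (by simp [W]), hN c (by simp [W])]
  · intro u v huv
    have huv : s(a, b) = s(u, v) := (mem_singleton.1 huv).symm
    have hmem (w : U) (hw : w ∈ s(u, v)) : w ∈ W := by
      rcases Sym2.mem_iff.1 (huv ▸ hw) with rfl | rfl <;> simp [W]
    exact ⟨x, hxr, huv, hN u (hmem u (Sym2.mem_mk_left u v)), hN v (hmem v (Sym2.mem_mk_right u v))⟩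
  · rintro S hS ⟨v, hvS⟩ hv
    obtain rfl := (hf v).1 hv
    exact exists_reachable_of_card_lt _ (by lia) fun u hu ↦
      replaceEdges_adj_of_mem (hN u hu) (hxf u)
  · have h := ncard_edgeSet_replaceEdges_le f N (D := D) (G' := G') (by simpa [D] using hab)
    have hNW : #N ≤ #W := card_image_le
    rw [card_singleton] at h
    lia

theorem threeConnected_replaceEdges_of_subdivide_two [DecidableEq U] (hG' : ThreeConnected G')
    (hcard : 4 ≤ Fintype.card U) {x y : V} (hxy : x ≠ y)
    (hf : ∀ v, v ∉ Set.range f ↔ v = x ∨ v = y) {a b c d : U} (hab : a ≠ b) (hcd : c ≠ d)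
    (hne : s(a, b) ≠ s(c, d)) (hNxy : s(x, y) ∈ N) (hNx : ∀ u ∈ s(a, b), s(x, f u) ∈ N)
    (hNy : ∀ u ∈ s(c, d), s(y, f u) ∈ N) :
    ThreeConnected (replaceEdges f G' {s(a, b), s(c, d)} N) := by
  classical
  have hxr : x ∉ Set.range f := (hf x).2 (.inl rfl)
  have hyr : y ∉ Set.range f := (hf y).2 (.inr rfl)
  have hxf (u : U) : x ≠ f u := fun h ↦ hxr ⟨u, h.symm⟩
  have hyf (u : U) : y ≠ f u := fun h ↦ hyr ⟨u, h.symm⟩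
  refine threeConnected_replaceEdges hG' hcard
    (fun v ↦ if v = x then s(a, b) else s(c, d)) ?_ ?_
  · intro u v huv
    rcases mem_insert.1 huv with huv | huv
    · exact ⟨x, hxr, by simp [huv], hNx u (huv ▸ Sym2.mem_mk_left u v),
        hNx v (huv ▸ Sym2.mem_mk_right u v)⟩
    · rw [mem_singleton] at huv
      exact ⟨y, hyr, by simp [hxy.symm, huv], hNy u (huv ▸ Sym2.mem_mk_left u v),
        hNy v (huv ▸ Sym2.mem_mk_right u v)⟩
  · set G := replaceEdges f G' {s(a, b), s(c, d)} N
    have hadj : G.Adj x y := replaceEdges_adj_of_mem hNxy hxy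
    have hadjx (u) (hu : u ∈ s(a, b)) : G.Adj x (f u) :=
      replaceEdges_adj_of_mem (hNx u hu) (hxf u)
    have hadjy (u) (hu : u ∈ s(c, d)) : G.Adj y (f u) :=
      replaceEdges_adj_of_mem (hNy u hu) (hyf u)
    rintro S hS ⟨v, hvS⟩ hv
    rcases (hf v).1 hv with rfl | rfl
    · exact exists_reachable_of_two_neighbors_and_link hS _ hyr hab hcd hne hadj hadjx hadjy
    · exact exists_reachable_of_two_neighbors_and_link hS _ hxr hcd hab hne.symm hadj.symm
        hadjy hadjx

theorem exists_threeConnected_of_subdivide_two {T : SimpleGraph V} (hG' : ThreeConnected G')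
    (hcard : 4 ≤ Fintype.card U) {x y : V} (hxy : x ≠ y)
    (hf : ∀ v, v ∉ Set.range f ↔ v = x ∨ v = y) (hle : T.comap f ≤ G')
    {a b c d : U} (hab : G'.Adj a b) (hcd : G'.Adj c d) (hne : s(a, b) ≠ s(c, d))
    (hTab : ¬T.Adj (f a) (f b)) (hTcd : ¬T.Adj (f c) (f d))
    (hx : ∀ v, T.Adj x v → v = y ∨ v = f a ∨ v = f b)
    (hy : ∀ v, T.Adj y v → v = x ∨ v = f c ∨ v = f d) :
    ∃ G, T ≤ G ∧ ThreeConnected G ∧ G.edgeSet.ncard ≤ G'.edgeSet.ncard + 3 := by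
  classical
  let D : Finset (Sym2 U) := {s(a, b), s(c, d)}
  let N : Finset (Sym2 V) := {s(x, y), s(x, f a), s(x, f b), s(y, f c), s(y, f d)}
  have hNxy : s(x, y) ∈ N := by simp [N]
  have hNx (u : U) (hu : u ∈ s(a, b)) : s(x, f u) ∈ N := by
    rcases Sym2.mem_iff.1 hu with rfl | rfl <;> simp [N]
  have hNy (u : U) (hu : u ∈ s(c, d)) : s(y, f u) ∈ N := by
    rcases Sym2.mem_iff.1 hu with rfl | rfl <;> simp [N]
  refine ⟨replaceEdges f G' D N, le_replaceEdges hle (by simpa [D] using ⟨hTab, hTcd⟩) ?_,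
    threeConnected_replaceEdges_of_subdivide_two hG' hcard hxy hf hab.ne hcd.ne hne hNxy hNx hNy,
    ?_⟩
  · rintro v hv w hvw
    rcases (hf v).1 hv with rfl | rfl
    · rcases hx w hvw with rfl | rfl | rfl
      exacts [hNxy, hNx a (by simp), hNx b (by simp)]
    · rcases hy w hvw with rfl | rfl | rfl
      exacts [Sym2.eq_swap ▸ hNxy, hNy c (by simp), hNy d (by simp)]
  · have h := ncard_edgeSet_replaceEdges_le f N (D := D) (G' := G')
      (by simpa [D, Set.insert_subset_iff] using ⟨hab, hcd⟩)
    have hNcard : #N ≤ 5 := card_le_five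
    rw [card_pair hne] at h
    lia

end ReplaceEdges

section Neighbors

variable {V : Type*} {T : SimpleGraph V} {x : V}

theorem eq_of_adj_of_degN_eq_one (hx : degN T x = 1) {u v : V} (hu : T.Adj x u) (hv : T.Adj x v) :
    u = v := by
  obtain ⟨b, hb⟩ := Set.ncard_eq_one.1 hx
  have hmem (w : V) (hw : T.Adj x w) : w = b := by
    rwa [← mem_neighborSet, hb, Set.mem_singleton_iff] at hw
  exact (hmem u hu).trans (hmem v hv).symm

theorem exists_neighbors_of_degN_eq_two (hx : degN T x = 2) :
    ∃ a b, a ≠ b ∧ T.Adj x a ∧ T.Adj x b ∧ ∀ v, T.Adj x v → v = a ∨ v = b := by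
  obtain ⟨a, b, hab, hN⟩ := Set.ncard_eq_two.1 hx
  have hiff (v : V) : T.Adj x v ↔ v = a ∨ v = b := by
    rw [← mem_neighborSet, hN, Set.mem_insert_iff, Set.mem_singleton_iff]
  exact ⟨a, b, hab, (hiff a).2 (.inl rfl), (hiff b).2 (.inr rfl), fun v ↦ (hiff v).1⟩

end Neighbors

section FiniteDegrees

variable {V : Type*} [Finite V] {G T : SimpleGraph V}

theorem degN_mono (h : T ≤ G) (v : V) : degN T v ≤ degN G v :=
  Set.ncard_le_ncard fun _ hw ↦ h hw

theorem degN_pos_of_connected [Nontrivial V] (hT : T.Connected) (v : V) : 0 < degN T v := by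
  obtain ⟨w, hw⟩ := hT.preconnected.exists_adj_of_nontrivial v
  exact (Set.ncard_pos).2 ⟨w, hw⟩

end FiniteDegrees

section Degrees

variable {V : Type*} [Fintype V] {G T : SimpleGraph V}

theorem degN_eq_degree (G : SimpleGraph V) [DecidableRel G.Adj] (v : V) :
    degN G v = G.degree v := by
  rw [degN, Set.ncard_eq_toFinset_card', ← card_neighborSet_eq_degree, Set.toFinset_card]

theorem sum_degN (G : SimpleGraph V) : ∑ v, degN G v = 2 * G.edgeSet.ncard := by
  classical
  simp only [degN_eq_degree, sum_degrees_eq_twice_card_edges, edgeFinset,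
    Set.ncard_eq_toFinset_card']

theorem SurvivesDeletion.lt_degN {k : ℕ} (hG : SurvivesDeletion k G)
    (hcard : k + 2 ≤ Fintype.card V) (v : V) : k < degN G v := by
  classical
  rw [degN_eq_degree]
  by_contra! hle
  have hlt : #(insert v (G.neighborFinset v)) < #(univ : Finset V) :=
    (card_insert_le _ _).trans_lt (by rw [card_neighborFinset_eq_degree, card_univ]; lia)
  obtain ⟨z, -, hz⟩ := exists_mem_notMem_of_card_lt_card hlt
  simp only [mem_insert, mem_neighborFinset, not_or] at hz
  let v₀ : ↥((G.neighborFinset v : Set V)ᶜ) := ⟨v, by simp⟩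
  have : Nontrivial ↥((G.neighborFinset v : Set V)ᶜ) :=
    ⟨⟨z, by simpa using hz.2⟩, v₀, by simpa [v₀] using hz.1⟩
  obtain ⟨w, hw⟩ := (hG _ hle).preconnected.exists_adj_of_nontrivial v₀
  exact w.2 (by simpa using hw)

/-- The total degree that every `3`-connected graph on at least four vertices containing `T` must
have: each vertex needs degree at least three and keeps its neighbours in `T`. -/
noncomputable def demand (T : SimpleGraph V) : ℕ :=
  ∑ v, max 3 (degN T v)

theorem three_mul_card_le_demand (T : SimpleGraph V) : 3 * Fintype.card V ≤ demand T := by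
  simpa [mul_comm, demand] using card_nsmul_le_sum univ (fun v ↦ max 3 (degN T v)) 3 (by simp)

theorem demand_le_of_threeConnected (hG : ThreeConnected G) (hTG : T ≤ G)
    (hcard : 4 ≤ Fintype.card V) : demand T ≤ 2 * G.edgeSet.ncard := by
  rw [← sum_degN]
  exact sum_le_sum fun v _ ↦
    max_le (SurvivesDeletion.lt_degN (k := 2) hG hcard v) (degN_mono hTG v)

theorem ncard_edgeSet_add_one_of_isTree (hT : T.IsTree) :
    T.edgeSet.ncard + 1 = Fintype.card V := by
  simpa [Nat.card_eq_fintype_card] using (isTree_iff_connected_and_card.1 hT).2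

theorem demand_add_two [Nontrivial V] (hT : T.IsTree) :
    demand T + 2 = 2 * Fintype.card V + 2 * #{v | degN T v = 1} + #{v | degN T v = 2} := by
  have hvertex (v : V) : max 3 (degN T v) =
      degN T v + 2 * (if degN T v = 1 then 1 else 0) + if degN T v = 2 then 1 else 0 := by
    have := degN_pos_of_connected hT.connected v
    grind
  have hsum : demand T = 2 * T.edgeSet.ncard + 2 * #{v | degN T v = 1} + #{v | degN T v = 2} := by
    simp only [demand, hvertex, sum_add_distrib, ← mul_sum, sum_degN, sum_boole, Nat.cast_id]
  have := ncard_edgeSet_add_one_of_isTree hT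
  lia

theorem exists_degN_eq_two_of_odd_demand [Nontrivial V] (hT : T.IsTree) (hodd : Odd (demand T)) :
    ∃ x, degN T x = 2 := by
  have hpos : 0 < #{v | degN T v = 2} := by
    have := demand_add_two hT
    rcases hodd with ⟨m, hm⟩
    lia
  obtain ⟨x, hx⟩ := card_pos.1 hpos
  exact ⟨x, (mem_filter.1 hx).2⟩

end Degrees

section Suppression

variable {V : Type*} {T : SimpleGraph V}

theorem not_adj_of_cliqueFree_three (hT : T.CliqueFree 3) {x u v : V} (hu : T.Adj x u)
    (hv : T.Adj x v) : ¬T.Adj u v := by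
  classical
  exact fun h ↦ hT {x, u, v} (is3Clique_triple_iff.2 ⟨hu, hv, h⟩)

/-- The graph obtained from `T` by suppressing the vertex `x`: delete `x` and join all its former
neighbours to each other. A leaf is thereby just deleted, and for a vertex of degree two the path
through it is replaced by an edge. -/
def suppress (T : SimpleGraph V) (x : V) : SimpleGraph {v // v ≠ x} where
  Adj u v := u ≠ v ∧ (T.Adj u v ∨ T.Adj x u ∧ T.Adj x v)
  symm := ⟨fun _ _ h ↦ ⟨h.1.symm, h.2.imp Adj.symm And.symm⟩⟩
  loopless := ⟨fun _ h ↦ h.1 rfl⟩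

theorem comap_le_suppress (T : SimpleGraph V) (x : V) :
    T.comap (Function.Embedding.subtype (· ≠ x)) ≤ suppress T x :=
  fun _ _ h ↦ ⟨fun huv ↦ T.ne_of_adj h (congrArg Subtype.val huv), .inl h⟩

theorem connected_suppress (hT : T.Connected) {x y : V} (hxy : T.Adj x y) :
    (suppress T x).Connected := by
  classical
  let y' : {v // v ≠ x} := ⟨y, hxy.ne'⟩
  have hreach (v : {v // v ≠ x}) (hv : T.Adj x v) : (suppress T x).Reachable y' v := by
    by_cases h : y' = v
    · rw [h]
    · exact Adj.reachable ⟨h, .inr ⟨hxy, hv⟩⟩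
  refine connected_of_reachable_map hT (fun v ↦ if h : v = x then y' else ⟨v, h⟩) ?_ ?_
  · intro u v huv
    by_cases hu : u = x <;> by_cases hv : v = x
    · exact absurd (hu.trans hv.symm) huv.ne
    · simpa only [hu, hv, dite_true, dite_false] using hreach ⟨v, hv⟩ (hu ▸ huv)
    · simpa only [hu, hv, dite_true, dite_false] using (hreach ⟨u, hu⟩ (hv ▸ huv.symm)).symm
    · simp only [hu, hv, dite_false]
      exact Adj.reachable (comap_le_suppress T x huv)
  · exact fun v ↦ ⟨v, by simp [v.2]⟩

theorem image_neighborSet_suppress (T : SimpleGraph V) {x : V} (v : {v // v ≠ x}) :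
    Subtype.val '' (suppress T x).neighborSet v =
      T.neighborSet v \ {x} ∪ {w | T.Adj x v ∧ w ∈ T.neighborSet x \ {v.1}} := by
  ext w
  have hxw : T.Adj x w → x ≠ w := T.ne_of_adj
  have hvw : T.Adj v w → v.1 ≠ w := T.ne_of_adj
  simp only [suppress, ne_eq, Subtype.ext_iff, Set.mem_image, mem_neighborSet, Subtype.exists,
    exists_and_right, exists_eq_right, Set.mem_union, Set.mem_sdiff, Set.mem_singleton_iff,
    Set.mem_ofPred_eq]
  grind

theorem degN_suppress_of_not_adj {x : V} {v : {v // v ≠ x}} (hv : ¬T.Adj x v) :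
    degN (suppress T x) v = degN T v := by
  have hx : x ∉ T.neighborSet v := fun h ↦ hv h.symm
  rw [degN, ← Set.ncard_image_of_injective _ Subtype.val_injective, image_neighborSet_suppress]
  simp [hv, hx, degN]

theorem degN_suppress_of_adj [Finite V] (hT : T.CliqueFree 3) {x : V} {v : {v // v ≠ x}}
    (hv : T.Adj x v) : degN (suppress T x) v + 2 = degN T v + degN T x := by
  have hdisj : Disjoint (T.neighborSet v \ {x}) (T.neighborSet x \ {v.1}) :=
    Set.disjoint_left.2 fun w hw hw' ↦ not_adj_of_cliqueFree_three hT hv hw'.1 hw.1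
  have h₁ := Set.ncard_sdiff_singleton_add_one (s := T.neighborSet v) hv.symm
  have h₂ := Set.ncard_sdiff_singleton_add_one (s := T.neighborSet x) hv
  rw [degN, ← Set.ncard_image_of_injective _ Subtype.val_injective, image_neighborSet_suppress]
  simp only [hv, true_and, Set.ofPred_mem_eq]
  rw [Set.ncard_union_eq hdisj]
  simp only [degN]
  lia

theorem degN_suppress_of_degN_eq_two [Finite V] (hT : T.CliqueFree 3) {x : V} (hx : degN T x = 2)
    (v : {v // v ≠ x}) : degN (suppress T x) v = degN T v := by
  by_cases hv : T.Adj x v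
  · have := degN_suppress_of_adj hT hv
    lia
  · exact degN_suppress_of_not_adj hv

end Suppression

section SuppressionInTrees

variable {V : Type*} {T : SimpleGraph V} {x : V}

section Finite

variable [Finite V]

theorem ncard_edgeSet_suppress (hT : T.CliqueFree 3) (x : V) :
    2 * (suppress T x).edgeSet.ncard + 3 * degN T x =
      2 * T.edgeSet.ncard + degN T x * degN T x := by
  classical
  have := Fintype.ofFinite V
  have hvertex (v : {v // v ≠ x}) : degN (suppress T x) v + (if T.Adj x v then 2 else 0) =
      degN T v + if T.Adj x v then degN T x else 0 := by
    split_ifs with hv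
    · exact degN_suppress_of_adj hT hv
    · simpa using degN_suppress_of_not_adj hv
  have hnbr (c : ℕ) : ∑ v : {v // v ≠ x}, (if T.Adj x v then c else 0) = degN T x * c := by
    have h := Fintype.sum_eq_add_sum_subtype_ne (fun v ↦ if T.Adj x v then c else 0) x
    rw [if_neg (T.loopless.irrefl x), zero_add] at h
    rw [← h, degN_eq_degree, ← card_neighborFinset_eq_degree, neighborFinset_eq_filter,
      ← sum_filter, sum_const, smul_eq_mul]
  have hsum := sum_congr (rfl : (univ : Finset {v // v ≠ x}) = univ) fun v _ ↦ hvertex v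
  have hdeg := Fintype.sum_eq_add_sum_subtype_ne (degN T) x
  simp only [sum_add_distrib, sum_degN, hnbr] at hsum hdeg
  lia

theorem isTree_suppress [Nontrivial V] (hT : T.IsTree) (hx : degN T x ≤ 2) :
    (suppress T x).IsTree := by
  classical
  have := Fintype.ofFinite V
  obtain ⟨y, hy⟩ := hT.connected.preconnected.exists_adj_of_nontrivial x
  refine isTree_iff_connected_and_card.2 ⟨connected_suppress hT.connected hy, ?_⟩
  have hE := ncard_edgeSet_suppress (hT.isAcyclic.cliqueFree le_rfl) x
  have hT' := ncard_edgeSet_add_one_of_isTree hT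
  have hpos := degN_pos_of_connected hT.connected x
  rw [Nat.card_coe_set_eq, Nat.card_eq_fintype_card, Fintype.card_subtype_compl,
    Fintype.card_subtype_eq]
  interval_cases degN T x <;> lia

end Finite

variable [Fintype V] [DecidableEq V]

theorem demand_suppress_of_degN_eq_two (hT : T.CliqueFree 3) (hx : degN T x = 2) :
    demand (suppress T x) + 3 = demand T := by
  have h := Fintype.sum_eq_add_sum_subtype_ne (fun v ↦ max 3 (degN T v)) x
  simp only [demand, degN_suppress_of_degN_eq_two hT hx]
  rw [h, hx]
  lia

theorem demand_suppress_of_degN_eq_one (hT : T.CliqueFree 3) (hx : degN T x = 1) {a : V}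
    (hxa : T.Adj x a) :
    demand (suppress T x) + 3 + max 3 (degN T a) = demand T + max 3 (degN T a - 1) := by
  let a' : {v // v ≠ x} := ⟨a, hxa.ne'⟩
  have hdega : degN (suppress T x) a' = degN T a - 1 := by
    have := degN_suppress_of_adj hT (v := a') hxa
    simp only [a'] at *
    lia
  have hdeg (v : {v // v ≠ x}) (hv : v ≠ a') : degN (suppress T x) v = degN T v :=
    degN_suppress_of_not_adj fun hxv ↦ hv (Subtype.ext (eq_of_adj_of_degN_eq_one hx hxv hxa))
  have hx_split := Fintype.sum_eq_add_sum_subtype_ne (fun v ↦ max 3 (degN T v)) x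
  have ha_split := add_sum_erase univ (fun v : {v // v ≠ x} ↦ max 3 (degN T v)) (mem_univ a')
  have ha_split' := add_sum_erase univ (fun v ↦ max 3 (degN (suppress T x) v)) (mem_univ a')
  rw [sum_congr rfl fun v hv ↦ by rw [hdeg v (ne_of_mem_erase hv)], hdega] at ha_split'
  rw [demand, demand]
  lia

end SuppressionInTrees

section SmallExtensions

variable {V : Type*} [Fintype V] {T G : SimpleGraph V} {x : V}

/-- `G` is a `3`-connected graph containing `T` with as few edges as `demand T` permits. -/
def IsSmallExtension (T G : SimpleGraph V) : Prop :=
  T ≤ G ∧ ThreeConnected G ∧ 2 * G.edgeSet.ncard ≤ demand T + 1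

theorem exists_adj_not_adj_avoiding (hT : T.IsTree) (hTG : T ≤ G) (hG : ThreeConnected G)
    (hcard : 4 ≤ Fintype.card V) (c : V) :
    ∃ p q, G.Adj p q ∧ ¬T.Adj p q ∧ p ≠ c ∧ q ≠ c := by
  classical
  have : Nontrivial V := Fintype.one_lt_card_iff_nontrivial.1 (by lia)
  obtain ⟨u, v, huv, hu, hv⟩ := hT.exists_ne_and_degree_eq_one
  obtain ⟨p, hpc, hp⟩ : ∃ p, p ≠ c ∧ degN T p = 1 := by
    rcases eq_or_ne u c with rfl | huc
    · exact ⟨v, huv.symm, degN_eq_degree T v ▸ hv⟩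
    · exact ⟨u, huc, degN_eq_degree T u ▸ hu⟩
  have hGp : 2 < degN G p := SurvivesDeletion.lt_degN (k := 2) hG hcard p
  have hlt : 1 < (G.neighborSet p \ T.neighborSet p).ncard := by
    have hsub : T.neighborSet p ⊆ G.neighborSet p := fun _ h ↦ hTG h
    rw [Set.ncard_sdiff hsub]
    unfold degN at hp hGp
    lia
  obtain ⟨q, hq, hqc⟩ := Set.exists_ne_of_one_lt_ncard hlt c
  exact ⟨p, q, hq.1, hq.2, hpc, hqc⟩

section SuppressOne

variable [DecidableEq V] {G' : SimpleGraph {v // v ≠ x}}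

theorem exists_isSmallExtension_of_degN_eq_two (hT : T.IsTree)
    (hG' : IsSmallExtension (suppress T x) G') (hcard : 5 ≤ Fintype.card V)
    (hodd : Odd (demand T)) (hx : degN T x = 2) : ∃ G, IsSmallExtension T G := by
  obtain ⟨hle, hconn, hE⟩ := hG'
  have hclique := hT.isAcyclic.cliqueFree le_rfl
  obtain ⟨a, b, hab, hxa, hxb, hN⟩ := exists_neighbors_of_degN_eq_two hx
  let a' : {v // v ≠ x} := ⟨a, hxa.ne'⟩
  let b' : {v // v ≠ x} := ⟨b, hxb.ne'⟩
  have hab' : G'.Adj a' b' := hle ⟨by simpa [a', b'] using hab, .inr ⟨hxa, hxb⟩⟩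
  have hcard' : 4 ≤ Fintype.card {v // v ≠ x} := by
    rw [Fintype.card_subtype_compl, Fintype.card_subtype_eq]; lia
  obtain ⟨c, -, hc⟩ : ∃ c ∈ univ, c ∉ ({a', b'} : Finset {v // v ≠ x}) :=
    exists_mem_notMem_of_card_lt_card (card_le_two.trans_lt (by rw [card_univ]; lia))
  rw [mem_insert, mem_singleton, not_or] at hc
  obtain ⟨G, hTG, hG, hGE⟩ := exists_threeConnected_of_subdivide_one
    (f := .subtype _) hconn hcard' (by simp) ((comap_le_suppress T x).trans hle) hab'
    (not_adj_of_cliqueFree_three hclique hxa hxb) hc.1 hc.2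
    (fun v hv ↦ (hN v hv).imp_right .inl)
  have hdemand := demand_suppress_of_degN_eq_two hclique hx
  rcases hodd with ⟨m, hm⟩
  exact ⟨G, hTG, hG, by lia⟩

theorem exists_isSmallExtension_of_leaf_adj_four_le (hT : T.IsTree)
    (hG' : IsSmallExtension (suppress T x) G') (hcard : 5 ≤ Fintype.card V)
    (hx : degN T x = 1) {a : V} (hxa : T.Adj x a) (ha : 4 ≤ degN T a) :
    ∃ G, IsSmallExtension T G := by
  obtain ⟨hle, hconn, hE⟩ := hG'
  have : Nontrivial V := ⟨x, a, hxa.ne⟩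
  have hcard' : 4 ≤ Fintype.card {v // v ≠ x} := by
    rw [Fintype.card_subtype_compl, Fintype.card_subtype_eq]; lia
  obtain ⟨p, q, hpq, hTpq, hp, hq⟩ := exists_adj_not_adj_avoiding
    (isTree_suppress hT (by lia)) hle hconn hcard' ⟨a, hxa.ne'⟩
  obtain ⟨G, hTG, hG, hGE⟩ := exists_threeConnected_of_subdivide_one
    (f := .subtype _) hconn hcard' (by simp) ((comap_le_suppress T x).trans hle) hpq
    (fun h ↦ hTpq (comap_le_suppress T x h)) hp.symm hq.symm
    (fun v hv ↦ .inr (.inr (eq_of_adj_of_degN_eq_one hx hv hxa)))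
  have hdemand := demand_suppress_of_degN_eq_one (hT.isAcyclic.cliqueFree le_rfl) hx hxa
  exact ⟨G, hTG, hG, by lia⟩

end SuppressOne

section SuppressTwo

variable [DecidableEq V] {y : {v // v ≠ x}} {G' : SimpleGraph {v // v ≠ y}}

theorem exists_isSmallExtension_of_suppress_suppress (hT' : (suppress T x).IsTree)
    (hG' : IsSmallExtension (suppress (suppress T x) y) G') (hcard : 6 ≤ Fintype.card V)
    (hdemand : demand (suppress T x) + 3 = demand T) (hy : degN (suppress T x) y = 2)
    {a b : {v // v ≠ y}} (hab : G'.Adj a b) (hTab : ¬T.Adj a b)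
    (hne : ∀ c d, (suppress T x).Adj y c → (suppress T x).Adj y d → s(a.1, b.1) ≠ s(c, d))
    (hx : ∀ v, T.Adj x v → v = y ∨ v = a ∨ v = b) : ∃ G, IsSmallExtension T G := by
  obtain ⟨hle, hconn, hE⟩ := hG'
  have hclique := hT'.isAcyclic.cliqueFree le_rfl
  obtain ⟨c, d, hcd, hyc, hyd, hN⟩ := exists_neighbors_of_degN_eq_two hy
  let c' : {v // v ≠ y} := ⟨c, hyc.ne'⟩
  let d' : {v // v ≠ y} := ⟨d, hyd.ne'⟩
  have hcd' : G'.Adj c' d' := hle ⟨by simpa [c', d'] using hcd, .inr ⟨hyc, hyd⟩⟩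
  have hTcd : ¬T.Adj c d := fun h ↦
    not_adj_of_cliqueFree_three hclique hyc hyd (comap_le_suppress T x h)
  have hne' : s(a, b) ≠ s(c', d') := fun h ↦ hne c d hyc hyd (congrArg (Sym2.map Subtype.val) h)
  let f : {v // v ≠ y} ↪ V := (Function.Embedding.subtype _).trans (.subtype _)
  have hf (v : V) : v ∉ Set.range f ↔ v = x ∨ v = y := by
    refine ⟨fun hv ↦ ?_, ?_⟩
    · by_contra! h
      exact hv ⟨⟨⟨v, h.1⟩, fun hvy ↦ h.2 (congrArg Subtype.val hvy)⟩, rfl⟩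
    · rintro h ⟨u, rfl⟩
      exact h.elim u.1.2 fun huy ↦ u.2 (Subtype.ext huy)
  have hTf : T.comap f ≤ G' := fun u v huv ↦
    hle (comap_le_suppress _ y (comap_le_suppress T x huv))
  have hcard' : 4 ≤ Fintype.card {v // v ≠ y} := by
    simp only [Fintype.card_subtype_compl, Fintype.card_subtype_eq]
    lia
  have hyN (v : V) (hv : T.Adj y v) : v = x ∨ v = c ∨ v = d := by
    by_cases hvx : v = x
    · exact .inl hvx
    · have hyv : (suppress T x).Adj y ⟨v, hvx⟩ := comap_le_suppress T x hv
      exact .inr ((hN _ hyv).imp (congrArg Subtype.val) (congrArg Subtype.val))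
  obtain ⟨G, hTG, hG, hGE⟩ := exists_threeConnected_of_subdivide_two hconn hcard' y.2.symm hf hTf
    hab hcd' hne' hTab hTcd hx hyN
  have := demand_suppress_of_degN_eq_two hclique hy
  exact ⟨G, hTG, hG, by lia⟩

theorem exists_isSmallExtension_of_leaf_adj_degN_eq_three (hT : T.IsTree)
    (hG' : IsSmallExtension (suppress (suppress T x) y) G') (hcard : 6 ≤ Fintype.card V)
    (hx : degN T x = 1) (hxy : T.Adj x y) (hy : degN T y = 3) : ∃ G, IsSmallExtension T G := by
  have : Nontrivial V := ⟨x, y, hxy.ne⟩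
  have : Nontrivial {v // v ≠ x} := Fintype.one_lt_card_iff_nontrivial.1 (by simp; lia)
  have hT' := isTree_suppress hT (x := x) (by lia)
  have hclique := hT.isAcyclic.cliqueFree le_rfl
  have hy' : degN (suppress T x) y = 2 := by
    have := degN_suppress_of_adj hclique hxy
    lia
  have hdemand := demand_suppress_of_degN_eq_one hclique hx hxy
  have hcard' : 4 ≤ Fintype.card {v // v ≠ y} := by simp; lia
  obtain ⟨z⟩ : Nonempty {v // v ≠ y} := Fintype.card_pos_iff.1 (by lia)
  obtain ⟨a, b, hab, hTab, -, -⟩ := exists_adj_not_adj_avoiding (isTree_suppress hT' hy'.le)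
    hG'.1 hG'.2.1 hcard' z
  refine exists_isSmallExtension_of_suppress_suppress hT' hG' hcard
    (by rw [hy] at hdemand; lia) hy' hab
    (fun h ↦ hTab (comap_le_suppress _ y (comap_le_suppress T x h))) (fun c d hyc hyd h ↦ ?_)
    (fun v hv ↦ .inl (eq_of_adj_of_degN_eq_one hx hv hxy))
  have hy_adj (u : {v // v ≠ x}) (hu : u ∈ s(a.1, b.1)) : (suppress T x).Adj y u := by
    rcases Sym2.mem_iff.1 (h ▸ hu) with rfl | rfl <;> assumption
  exact hTab ⟨hab.ne, .inr ⟨hy_adj a (Sym2.mem_mk_left _ _), hy_adj b (Sym2.mem_mk_right _ _)⟩⟩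

theorem exists_isSmallExtension_of_degN_eq_two_of_not_adj (hT : T.IsTree)
    (hG' : IsSmallExtension (suppress (suppress T x) y) G') (hcard : 6 ≤ Fintype.card V)
    (hx : degN T x = 2) (hxy : ¬T.Adj x y) (hy : degN T y = 2) : ∃ G, IsSmallExtension T G := by
  have : Nontrivial V := ⟨x, y, y.2.symm⟩
  have hT' := isTree_suppress hT hx.le
  have hclique := hT.isAcyclic.cliqueFree le_rfl
  obtain ⟨a, b, hab, hxa, hxb, hN⟩ := exists_neighbors_of_degN_eq_two hx
  let a' : {v // v ≠ y} := ⟨⟨a, hxa.ne'⟩, fun h ↦ hxy (h ▸ hxa)⟩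
  let b' : {v // v ≠ y} := ⟨⟨b, hxb.ne'⟩, fun h ↦ hxy (h ▸ hxb)⟩
  have hab' : (suppress T x).Adj a' b' := ⟨by simpa [a', b'] using hab, .inr ⟨hxa, hxb⟩⟩
  refine exists_isSmallExtension_of_suppress_suppress (a := a') (b := b') hT' hG' hcard
    (demand_suppress_of_degN_eq_two hclique hx)
    ((degN_suppress_of_degN_eq_two hclique hx y).trans hy)
    (hG'.1 (comap_le_suppress _ y hab')) (not_adj_of_cliqueFree_three hclique hxa hxb)
    (fun c d hyc hyd h ↦ ?_) (fun v hv ↦ .inr (hN v hv))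
  have hcd : (suppress T x).Adj c d := by
    rwa [← mem_edgeSet, ← h]
  exact not_adj_of_cliqueFree_three (hT'.isAcyclic.cliqueFree le_rfl) hyc hyd hcd

end SuppressTwo

end SmallExtensions

section ReducibleConfigurations

variable {V : Type*} [Fintype V] {T : SimpleGraph V}

theorem exists_adj_degN_ne_one (hT : T.Connected) {v : V} (hv : degN T v + 1 < Fintype.card V) :
    ∃ w, T.Adj v w ∧ degN T w ≠ 1 := by
  classical
  by_contra! h
  have hlt : #(insert v (T.neighborFinset v)) < #(univ : Finset V) := by
    rw [degN_eq_degree] at hv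
    rwa [card_insert_of_notMem (by simp), card_neighborFinset_eq_degree, card_univ]
  obtain ⟨z, -, hz⟩ := exists_mem_notMem_of_card_lt_card hlt
  obtain ⟨p⟩ := hT.preconnected v z
  obtain ⟨d, -, hfst, hsnd⟩ := p.exists_boundary_dart (insert v (T.neighborSet v)) (by simp)
    (by simpa using hz)
  rw [Set.mem_insert_iff, mem_neighborSet] at hfst hsnd
  push Not at hsnd
  rcases hfst with hfst | hfst
  · exact hsnd.2 (hfst ▸ d.adj)
  · exact hsnd.1 (eq_of_adj_of_degN_eq_one (h _ hfst) d.adj hfst.symm)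

theorem adj_of_card_le_degN_add_one {v w : V} (hv : Fintype.card V ≤ degN T v + 1) (hvw : v ≠ w) :
    T.Adj v w := by
  classical
  by_contra h
  have hle := card_le_univ (insert w (insert v (T.neighborFinset v)))
  rw [card_insert_of_notMem (by simp [h, hvw.symm]), card_insert_of_notMem (by simp),
    card_neighborFinset_eq_degree, ← degN_eq_degree] at hle
  lia

theorem card_leaves_le_of_forall_degN_eq_two (hT : T.Connected) (hcard : 4 ≤ Fintype.card V)
    (h : ∀ x a, T.Adj x a → degN T x = 1 → degN T a = 2) :
    #{v | degN T v = 1} ≤ #{v | degN T v = 2} := by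
  have : Nontrivial V := Fintype.one_lt_card_iff_nontrivial.1 (by lia)
  refine card_le_card_of_forall_subsingleton T.Adj (fun x hx ↦ ?_) (fun a ha ↦ ?_)
  · obtain ⟨a, hxa⟩ := hT.preconnected.exists_adj_of_nontrivial x
    exact ⟨a, by simpa using h x a hxa (by simpa using hx), hxa⟩
  · rintro x ⟨hx, hxa⟩ y ⟨hy, hya⟩
    simp only [mem_filter_univ] at ha hx hy
    by_contra hxy
    obtain ⟨b, c, -, -, -, hN⟩ := exists_neighbors_of_degN_eq_two ha
    obtain ⟨w, haw, hw⟩ := exists_adj_degN_ne_one hT (v := a) (by lia)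
    grind [T.adj_comm]

theorem exists_degN_eq_two_not_adj (hT : T.IsTree) (hcard : 6 ≤ Fintype.card V)
    (h : ∀ x a, T.Adj x a → degN T x = 1 → degN T a = 2) :
    ∃ x y, x ≠ y ∧ ¬T.Adj x y ∧ degN T x = 2 ∧ degN T y = 2 := by
  have : Nontrivial V := Fintype.one_lt_card_iff_nontrivial.1 (by lia)
  have hthree : 2 < #{v | degN T v = 2} := by
    have := card_leaves_le_of_forall_degN_eq_two hT.connected (by lia) h
    have := three_mul_card_le_demand T
    have := demand_add_two hT
    lia
  obtain ⟨x, hx, y, hy, z, hz, hxy, hxz, hyz⟩ := two_lt_card.1 hthree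
  simp only [mem_filter_univ] at hx hy hz
  by_cases hadj : T.Adj x y
  · by_cases hadj' : T.Adj x z
    · exact ⟨y, z, hyz, not_adj_of_cliqueFree_three (hT.isAcyclic.cliqueFree le_rfl) hadj hadj',
        hy, hz⟩
    · exact ⟨x, z, hxz, hadj', hx, hz⟩
  · exact ⟨x, y, hxy, hadj, hx, hy⟩

theorem exists_leaf_adj_four_le_of_even_demand (hT : T.IsTree) (hcard : Fintype.card V = 5)
    (heven : Even (demand T)) : ∃ x a, T.Adj x a ∧ degN T x = 1 ∧ 4 ≤ degN T a := by
  classical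
  have : Nontrivial V := Fintype.one_lt_card_iff_nontrivial.1 (by lia)
  obtain ⟨a, ha⟩ : ∃ a, 4 ≤ degN T a := by
    by_contra! h
    have hdemand : demand T = 15 := by
      simp [demand, fun v ↦ max_eq_left (Nat.le_of_lt_succ (h v)), hcard]
    grind
  obtain ⟨x, -, -, hx, -⟩ := hT.exists_ne_and_degree_eq_one
  rw [← degN_eq_degree] at hx
  exact ⟨x, a, (adj_of_card_le_degN_add_one (by lia) (by rintro rfl; lia)).symm, hx, ha⟩

theorem exists_reducible_configuration (hT : T.IsTree) (hcard : 5 ≤ Fintype.card V) :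
    (Odd (demand T) ∧ ∃ x, degN T x = 2) ∨
      (∃ x a, T.Adj x a ∧ degN T x = 1 ∧ 4 ≤ degN T a) ∨
      6 ≤ Fintype.card V ∧ ((∃ x a, T.Adj x a ∧ degN T x = 1 ∧ degN T a = 3) ∨
        ∃ x y, x ≠ y ∧ ¬T.Adj x y ∧ degN T x = 2 ∧ degN T y = 2) := by
  have : Nontrivial V := Fintype.one_lt_card_iff_nontrivial.1 (by lia)
  rcases Nat.even_or_odd (demand T) with heven | hodd
  · refine .inr ?_
    rcases hcard.eq_or_lt with hfive | hsix
    · exact .inl (exists_leaf_adj_four_le_of_even_demand hT hfive.symm heven)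
    · by_cases h : ∀ x a, T.Adj x a → degN T x = 1 → degN T a = 2
      · exact .inr ⟨hsix, .inr (exists_degN_eq_two_not_adj hT hsix h)⟩
      · push Not at h
        obtain ⟨x, a, hxa, hx, ha⟩ := h
        have ha_ne_one : degN T a ≠ 1 := by
          obtain ⟨w, hxw, hw⟩ := exists_adj_degN_ne_one hT.connected (v := x) (by lia)
          rwa [eq_of_adj_of_degN_eq_one hx hxa hxw]
        have ha_pos := degN_pos_of_connected hT.connected a
        rcases (by lia : degN T a = 3 ∨ 4 ≤ degN T a) with ha | ha
        · exact .inr ⟨hsix, .inl ⟨x, a, hxa, hx, ha⟩⟩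
        · exact .inl ⟨x, a, hxa, hx, ha⟩
  · exact .inl ⟨hodd, exists_degN_eq_two_of_odd_demand hT hodd⟩

end ReducibleConfigurations

section Optimum

theorem threeConnected_top {V : Type*} [Fintype V] (hcard : 4 ≤ Fintype.card V) :
    ThreeConnected (⊤ : SimpleGraph V) := by
  intro S hS
  obtain ⟨v, -, hv⟩ := exists_mem_notMem_of_card_lt_card (hS.trans_lt (by rw [card_univ]; lia) :
    #S < #(univ : Finset V))
  have : Nonempty ↥((S : Set V)ᶜ) := ⟨⟨v, hv⟩⟩
  rw [induce_top]
  exact connected_top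

theorem isSmallExtension_top {V : Type*} [Fintype V] (T : SimpleGraph V)
    (hcard : Fintype.card V = 4) : IsSmallExtension T ⊤ := by
  classical
  have hE : (⊤ : SimpleGraph V).edgeSet.ncard = 6 := by
    rw [← coe_edgeFinset, Set.ncard_coe_finset, card_edgeFinset_top_eq_card_choose_two, hcard]
    rfl
  have := three_mul_card_le_demand T
  exact ⟨le_top, threeConnected_top hcard.ge, by lia⟩

theorem exists_isSmallExtension {V : Type*} [Fintype V] {T : SimpleGraph V} (hT : T.IsTree)
    (hcard : 4 ≤ Fintype.card V) : ∃ G, IsSmallExtension T G := by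
  classical
  induction hn : Fintype.card V using Nat.strong_induction_on generalizing V with | _ n ih
  subst hn
  have : Nontrivial V := Fintype.one_lt_card_iff_nontrivial.1 (by lia)
  rcases hcard.eq_or_lt with hfour | hfive
  · exact ⟨⊤, isSmallExtension_top T hfour.symm⟩
  have hcard' (x : V) : Fintype.card {v // v ≠ x} + 1 = Fintype.card V := by
    rw [Fintype.card_subtype_compl, Fintype.card_subtype_eq]
    lia
  have hone {x : V} (hx : degN T x ≤ 2) : ∃ G', IsSmallExtension (suppress T x) G' := by
    have := hcard' x
    exact ih _ (by lia) (isTree_suppress hT hx) (by lia) rfl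
  have htwo (hsix : 6 ≤ Fintype.card V) {x : V} (hx : degN T x ≤ 2) {y : {v // v ≠ x}}
      (hy : degN (suppress T x) y ≤ 2) :
      ∃ G', IsSmallExtension (suppress (suppress T x) y) G' := by
    have := hcard' x
    have hcard'' : Fintype.card {v // v ≠ y} + 1 = Fintype.card {v // v ≠ x} := by
      rw [Fintype.card_subtype_compl, Fintype.card_subtype_eq]
      lia
    have : Nontrivial {v // v ≠ x} := Fintype.one_lt_card_iff_nontrivial.1 (by lia)
    exact ih _ (by lia) (isTree_suppress (isTree_suppress hT hx) hy) (by lia) rfl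
  rcases exists_reducible_configuration hT hfive with
    ⟨hodd, x, hx⟩ | ⟨x, a, hxa, hx, ha⟩ | ⟨hsix, ⟨x, a, hxa, hx, ha⟩ | ⟨x, y, hxy, hadj, hx, hy⟩⟩
  · obtain ⟨G', hG'⟩ := hone hx.le
    exact exists_isSmallExtension_of_degN_eq_two hT hG' hfive hodd hx
  · obtain ⟨G', hG'⟩ := hone (x := x) (by lia)
    exact exists_isSmallExtension_of_leaf_adj_four_le hT hG' hfive hx hxa ha
  · have hy := degN_suppress_of_adj (v := ⟨a, hxa.ne'⟩) (hT.isAcyclic.cliqueFree le_rfl) hxa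
    obtain ⟨G', hG'⟩ := htwo hsix (x := x) (by lia) (y := ⟨a, hxa.ne'⟩) (by lia)
    exact exists_isSmallExtension_of_leaf_adj_degN_eq_three hT hG' hsix hx hxa ha
  · have hy' := degN_suppress_of_degN_eq_two (hT.isAcyclic.cliqueFree le_rfl) hx ⟨y, hxy.symm⟩
    obtain ⟨G', hG'⟩ := htwo hsix hx.le (hy'.trans hy).le
    exact exists_isSmallExtension_of_degN_eq_two_of_not_adj hT hG' hsix hx hadj hy

end Optimum

section AugmentingSets

variable {V : Type*} [Finite V] {T : SimpleGraph V}

theorem ncard_edgeSet_sup_fromEdgeSet_le (T : SimpleGraph V) (F : Finset (Sym2 V)) :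
    (T ⊔ fromEdgeSet (F : Set (Sym2 V))).edgeSet.ncard ≤ T.edgeSet.ncard + #F := by
  rw [edgeSet_sup, edgeSet_fromEdgeSet, ← Set.ncard_coe_finset F]
  exact (Set.ncard_union_le _ _).trans
    (Nat.add_le_add_left (Set.ncard_le_ncard Set.sdiff_subset) _)

theorem exists_finset_sup_fromEdgeSet_eq {G : SimpleGraph V} (hTG : T ≤ G) :
    ∃ F : Finset (Sym2 V), (∀ e ∈ F, ¬e.IsDiag ∧ e ∉ T.edgeSet) ∧
      T ⊔ fromEdgeSet (F : Set (Sym2 V)) = G ∧ T.edgeSet.ncard + #F = G.edgeSet.ncard := by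
  classical
  have := Fintype.ofFinite V
  have hF : (((G.edgeSet \ T.edgeSet).toFinset : Finset (Sym2 V)) : Set (Sym2 V)) =
      G.edgeSet \ T.edgeSet := Set.coe_toFinset _
  refine ⟨(G.edgeSet \ T.edgeSet).toFinset, fun e he ↦ ?_, ?_, ?_⟩
  · rw [Set.mem_toFinset] at he
    exact ⟨G.not_isDiag_of_mem_edgeSet he.1, he.2⟩
  · rw [hF, fromEdgeSet_sdiff, fromEdgeSet_edgeSet, fromEdgeSet_edgeSet, sup_sdiff_cancel_right hTG]
  · rw [← Set.ncard_coe_finset, hF, add_comm]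
    exact Set.ncard_sdiff_add_ncard_of_subset (edgeSet_mono hTG)

end AugmentingSets

end TreeAugmentation

open TreeAugmentation

/-- For a tree `T` on `n ≥ 4` vertices, the minimum size of an augmenting set of
non-edges making the graph 3-vertex-connected is exactly `⌈(2·l₁ + l₂)/2⌉`. -/
theorem tree_triconnectivity_augmentation_optimal
    {V : Type*} [Fintype V] (T : SimpleGraph V) (hT : T.IsTree)
    (hn : 4 ≤ Fintype.card V) :
    IsLeast {k : ℕ | ∃ F : Finset (Sym2 V),
        (∀ e ∈ F, ¬ e.IsDiag ∧ e ∉ T.edgeSet) ∧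
        ThreeConnected (T ⊔ SimpleGraph.fromEdgeSet (F : Set (Sym2 V))) ∧
        F.card = k}
      ((2 * (Finset.univ.filter (fun v => degN T v = 1)).card
          + (Finset.univ.filter (fun v => degN T v = 2)).card + 1) / 2) := by
  have : Nontrivial V := Fintype.one_lt_card_iff_nontrivial.1 (by lia)
  have hdemand := demand_add_two hT
  have hedges := ncard_edgeSet_add_one_of_isTree hT
  have hlower (F : Finset (Sym2 V))
      (hF : ThreeConnected (T ⊔ SimpleGraph.fromEdgeSet (F : Set (Sym2 V)))) :
      demand T ≤ 2 * (T.edgeSet.ncard + F.card) :=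
    (demand_le_of_threeConnected hF le_sup_left hn).trans
      (Nat.mul_le_mul_left 2 (ncard_edgeSet_sup_fromEdgeSet_le T F))
  refine ⟨?_, ?_⟩
  · obtain ⟨G, hTG, hG, hsmall⟩ := exists_isSmallExtension hT hn
    obtain ⟨F, hnew, rfl, hcard⟩ := exists_finset_sup_fromEdgeSet_eq hTG
    have := hlower F hG
    exact ⟨F, hnew, hG, by lia⟩
  · rintro k ⟨F, -, hF, rfl⟩
    have := hlower F hF
    lia
end

section
/- Let n ≥ 4 be an even natural number, and let H be the simple graph on the vertex set ZMod n in which distinct vertices u and v are adjacent if and only if u − v ∈ {1, −1, n/2} (i.e., H is the n-cycle together with all antipodal chords {i, i + n/2}). Then H is 3-vertex-connected. -/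
/-!
Deleting `a` and `a + d` from the cycle on `ZMod n` leaves the two arcs `a + 1, …, a + (d - 1)` and
`a + (d + 1), …, a + (n - 1)`, each of which is a path. When neither is empty they are joined by a
chord: for `2 ≤ k ≤ n - 2`, adding `k` to the positions `d + 1, …, n - 1` gives a block of
consecutive positions that meets `n + 1, …, n + (d - 1)`. So deleting any two vertices leaves a
connected graph, and this forces the deletion of fewer vertices to do so: the vertices put back
still have neighbors among the others.
-/

open SimpleGraph

section Graph

variable {V : Type*} {G : SimpleGraph V}

theorem connected_induce_of_subset {s t : Set V} (hs : (G.induce s).Connected) (hst : s ⊆ t)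
    (hadj : ∀ v ∈ t \ s, ∃ w ∈ s, G.Adj v w) : (G.induce t).Connected := by
  obtain ⟨u, hu⟩ := hs.nonempty
  refine G.induce_connected_of_patches u (hst hu) fun {v} hv ↦ ?_
  by_cases hvs : v ∈ s
  · exact ⟨s, hst, hu, hvs, hs.preconnected _ _⟩
  · obtain ⟨w, hw, hvw⟩ := hadj v ⟨hv, hvs⟩
    have hconn : (G.induce ({v} ∪ s)).Connected :=
      connected_induce_union .of_subsingleton hs.preconnected rfl hw hvw
    exact ⟨{v} ∪ s, Set.union_subset (Set.singleton_subset_iff.2 hv) hst, .inr hu, .inl rfl,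
      hconn.preconnected _ _⟩

theorem connected_induce_image_Ico {f : ℕ → V} {l r : ℕ} (hlr : l < r)
    (hadj : ∀ i, l ≤ i → i + 1 < r → G.Adj (f i) (f (i + 1))) :
    (G.induce (f '' Set.Ico l r)).Connected := by
  induction r, hlr using Nat.le_induction with
  | base =>
    rw [Nat.succ_eq_add_one, Set.Ico_add_one_right_eq_Icc, Set.Icc_self, Set.image_singleton]
    exact .of_subsingleton
  | succ r hlr ih =>
    obtain ⟨m, rfl⟩ := Nat.exists_eq_add_of_lt hlr
    have hconn := ih fun i hli hir ↦ hadj i hli (by omega)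
    rw [← Set.insert_Ico_right_eq_Ico_add_one (by omega), Set.image_insert_eq, Set.insert_eq]
    exact connected_induce_union .of_subsingleton hconn.preconnected rfl
      (Set.mem_image_of_mem f ⟨by omega, by omega⟩) (hadj (l + m) (by omega) (by omega)).symm

theorem exists_adj_ne_of_forall_pair [Fintype V] (hV : 4 ≤ Fintype.card V)
    (hpair : ∀ a b, a ≠ b → (G.induce {a, b}ᶜ).Connected) {a b : V} (hab : a ≠ b) :
    ∃ w, w ≠ b ∧ G.Adj a w := by
  classical
  have hcard : 1 < ({a, b}ᶜ : Finset V).card := by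
    rw [Finset.card_compl, Finset.card_pair hab]
    omega
  obtain ⟨c, hc, d, hd, hcd⟩ := Finset.one_lt_card.1 hcard
  simp only [Finset.mem_compl, Finset.mem_insert, Finset.mem_singleton, not_or] at hc hd
  have ha : a ∈ ({b, c}ᶜ : Set V) := by simp [hab, Ne.symm hc.1]
  have hd' : d ∈ ({b, c}ᶜ : Set V) := by simp [hd.2, hcd.symm]
  have : Nontrivial ({b, c}ᶜ : Set V) := ⟨⟨a, ha⟩, ⟨d, hd'⟩, by simpa using Ne.symm hd.1⟩
  obtain ⟨⟨w, hw⟩, haw⟩ :=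
    (hpair b c (Ne.symm hc.2)).preconnected.exists_adj_of_nontrivial ⟨a, ha⟩
  exact ⟨w, fun hwb ↦ hw (.inl hwb), haw⟩

theorem ThreeConnected.of_forall_pair [Fintype V] (hV : 4 ≤ Fintype.card V)
    (hpair : ∀ a b, a ≠ b → (G.induce {a, b}ᶜ).Connected) : ThreeConnected G := by
  classical
  intro S hS
  obtain ⟨T, hST, hT⟩ := Finset.exists_superset_card_eq hS (by omega)
  obtain ⟨a, b, hab, rfl⟩ := Finset.card_eq_two.1 hT
  have hS_sub : (S : Set V) ⊆ {a, b} := by simpa using Finset.coe_subset.2 hST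
  refine connected_induce_of_subset (hpair a b hab) (Set.compl_subset_compl.2 hS_sub) ?_
  rintro v ⟨-, hv⟩
  obtain rfl | rfl : v = a ∨ v = b := Set.not_notMem.1 hv
  · obtain ⟨w, hwb, hvw⟩ := exists_adj_ne_of_forall_pair hV hpair hab
    exact ⟨w, by simp [hwb, hvw.ne'], hvw⟩
  · obtain ⟨w, hwa, hvw⟩ := exists_adj_ne_of_forall_pair hV hpair hab.symm
    exact ⟨w, by simp [hwa, hvw.ne'], hvw⟩

end Graph

section Cycle

variable {n : ℕ}

/-- The arc `a + l, …, a + (r - 1)` of the cycle on `ZMod n`. Positions are natural numbers counted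
from `a`, so that arcs are cut out by the order of `ℕ`. -/
def cycleArc (a : ZMod n) (l r : ℕ) : Set (ZMod n) :=
  (fun i : ℕ ↦ a + (i : ZMod n)) '' Set.Ico l r

theorem cycleArc_self (a : ZMod n) (l : ℕ) : cycleArc a l l = ∅ := by
  simp [cycleArc]

theorem compl_pair_eq_cycleArc_union (a : ZMod n) {d : ℕ} (hd : d < n) :
    ({a, a + (d : ZMod n)} : Set (ZMod n))ᶜ = cycleArc a 1 d ∪ cycleArc a (d + 1) n := by
  have : NeZero n := ⟨by omega⟩
  let f : ℕ → ZMod n := fun i ↦ a + (i : ZMod n)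
  have hinj : Set.InjOn f (Set.Iio n) :=
    (add_right_injective a).comp_injOn (CharP.natCast_injOn_Iio (ZMod n) n)
  have hsurj : f '' Set.Iio n = Set.univ :=
    Set.eq_univ_of_forall fun x ↦ ⟨(x - a).val, ZMod.val_lt _, by simp [f]⟩
  have hsub : ({0, d} : Set ℕ) ⊆ Set.Iio n := by
    rintro i (rfl | rfl) <;> simp only [Set.mem_Iio] <;> omega
  have hsplit : Set.Iio n \ {0, d} = Set.Ico 1 d ∪ Set.Ico (d + 1) n := by
    ext i
    simp only [Set.mem_sdiff, Set.mem_Iio, Set.mem_insert_iff, Set.mem_singleton_iff,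
      Set.mem_union, Set.mem_Ico]
    omega
  calc ({a, a + (d : ZMod n)} : Set (ZMod n))ᶜ
    _ = f '' Set.Iio n \ f '' {0, d} := by
      simp [hsurj, f, Set.image_pair, Set.compl_eq_univ_sdiff]
    _ = f '' (Set.Ico 1 d ∪ Set.Ico (d + 1) n) := by rw [← hinj.image_sdiff_subset hsub, hsplit]
    _ = cycleArc a 1 d ∪ cycleArc a (d + 1) n := Set.image_union ..

theorem exists_mem_cycleArc_add_mem_cycleArc (a : ZMod n) {d k : ℕ} (hd : 2 ≤ d) (hdn : d + 2 ≤ n)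
    (hk : 2 ≤ k) (hkn : k + 2 ≤ n) :
    ∃ x ∈ cycleArc a (d + 1) n, x + (k : ZMod n) ∈ cycleArc a 1 d := by
  obtain ⟨j, i, hj, hi, hji⟩ :
      ∃ j i, j ∈ Set.Ico (d + 1) n ∧ i ∈ Set.Ico 1 d ∧ j + k = i + n := by
    refine ⟨max (d + 1) (n + 1 - k), max (d + 1) (n + 1 - k) + k - n, ?_⟩
    simp only [Set.mem_Ico]
    omega
  refine ⟨_, ⟨j, hj, rfl⟩, i, hi, ?_⟩
  have hcast : (j : ZMod n) + k = i := by simpa using congrArg (Nat.cast : ℕ → ZMod n) hji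
  simp only [add_assoc, hcast]

variable {G : SimpleGraph (ZMod n)}

theorem connected_induce_cycleArc (hcycle : ∀ x, G.Adj x (x + 1)) (a : ZMod n) {l r : ℕ}
    (hlr : l < r) : (G.induce (cycleArc a l r)).Connected :=
  connected_induce_image_Ico hlr fun i _ _ ↦ by
    simpa only [Nat.cast_add_one, add_assoc] using hcycle (a + (i : ZMod n))

theorem connected_induce_compl_pair {k : ℕ} (hk : 2 ≤ k) (hkn : k + 2 ≤ n)
    (hcycle : ∀ x, G.Adj x (x + 1)) (hchord : ∀ x, G.Adj x (x + (k : ZMod n)))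
    {a b : ZMod n} (hab : a ≠ b) : (G.induce {a, b}ᶜ).Connected := by
  have : NeZero n := ⟨by omega⟩
  obtain ⟨d, hdn, rfl⟩ : ∃ d < n, b = a + (d : ZMod n) :=
    ⟨(b - a).val, ZMod.val_lt _, by simp⟩
  have hd : d ≠ 0 := by
    rintro rfl
    simp at hab
  rw [compl_pair_eq_cycleArc_union a hdn]
  obtain rfl | hd2 : d = 1 ∨ 2 ≤ d := by omega
  · rw [cycleArc_self, Set.empty_union]
    exact connected_induce_cycleArc hcycle a (by omega)
  obtain rfl | hdn2 : n = d + 1 ∨ d + 2 ≤ n := by omega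
  · rw [cycleArc_self, Set.union_empty]
    exact connected_induce_cycleArc hcycle a hd2
  obtain ⟨x, hx, hxk⟩ := exists_mem_cycleArc_add_mem_cycleArc a hd2 hdn2 hk hkn
  exact connected_induce_union (connected_induce_cycleArc hcycle a (by omega)).preconnected
    (connected_induce_cycleArc hcycle a (by omega)).preconnected hxk hx (hchord x).symm

end Cycle

theorem circulantGraph_adj_add_right {A : Type*} [AddCommGroup A] {s : Set A} {g : A} (hg : g ∈ s)
    (hg0 : g ≠ 0) (x : A) : (circulantGraph s).Adj x (x + g) := by
  simp [hg, hg0]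

theorem cycle_with_antipodal_chords_three_connected_general
    (n : ℕ) [NeZero n] (k : ℕ) (hk : 2 ≤ k) (hkn : k + 2 ≤ n) (H : SimpleGraph (ZMod n))
    (hH : circulantGraph {1, (k : ZMod n)} ≤ H) : ThreeConnected H := by
  have natCast_ne_zero {m : ℕ} (hm : 0 < m) (hmn : m < n) : (m : ZMod n) ≠ 0 := fun h ↦
    Nat.not_dvd_of_pos_of_lt hm hmn ((ZMod.natCast_eq_zero_iff m n).1 h)
  have hcycle (x : ZMod n) : H.Adj x (x + 1) :=
    hH (circulantGraph_adj_add_right (.inl rfl)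
      (by simpa using natCast_ne_zero one_pos (by omega)) x)
  have hchord (x : ZMod n) : H.Adj x (x + (k : ZMod n)) :=
    hH (circulantGraph_adj_add_right (.inr rfl) (natCast_ne_zero (by omega) (by omega)) x)
  exact .of_forall_pair (by rw [ZMod.card]; omega) fun _ _ hab ↦
    connected_induce_compl_pair hk hkn hcycle hchord hab

/-- For even `n ≥ 4`, the circulant graph on `ZMod n` in which distinct `u, v` are
adjacent iff `u - v ∈ {1, -1, n/2}` (the `n`-cycle plus all antipodal chords) is
3-vertex-connected. -/
theorem cycle_with_antipodal_chords_three_connected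
    (n : ℕ) [NeZero n] (hn : 4 ≤ n) (heven : Even n)
    (H : SimpleGraph (ZMod n))
    (hH : ∀ u v : ZMod n, H.Adj u v ↔
      u ≠ v ∧ u - v ∈ ({1, -1, ((n / 2 : ℕ) : ZMod n)} : Set (ZMod n))) :
    ThreeConnected H := by
  refine cycle_with_antipodal_chords_three_connected_general n (n / 2) (by omega) (by omega) H ?_
  rintro u v ⟨huv, h | h⟩
  exacts [(hH u v).2 ⟨huv, h.imp_right .inr⟩, ((hH v u).2 ⟨huv.symm, h.imp_right .inr⟩).symm]
end

section
/- Let n ≥ 5 be an odd natural number, and let H be the simple graph on the vertex set ZMod n whose edges are: the cycle edges {i, i+1} for all i ∈ ZMod n; the chords {i, i + ⌊n/2⌋} for i ∈ {1, 2, …, ⌊n/2⌋}; and the additional chord {0, ⌊n/2⌋ + 1} (writing vertex 0 for v_n). Then H is 3-vertex-connected and every vertex of H has degree at least 3. -/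
/-!
Deleting two vertices `a < b` from a graph on `ZMod n` that contains the `n`-cycle leaves two arcs
of the cycle, one inside `(a, b)` and one wrapping around from `b` to `a`. Each arc is connected,
so all that is needed is an edge crossing from one to the other. Put `m = ⌊n/2⌋`.
* If `a = 0`, take `{1, 1 + m}` when `b ≤ m` and `{n - 1 - m, n - 1}` when `b > m`.
* If `0 < a`, take the chord `{a + 1, a + 1 + m}` when `b ≤ m + 1`, the chord `{0, m + 1}` when
  `a < m + 1 < b`, and the chord `{a + 1 - m, a + 1}` when `m + 1 ≤ a`.

Deleting fewer vertices follows from deleting exactly two, as there are at least four vertices.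
The degree bound is a consequence of 3-connectedness: deleting all neighbours of a vertex of degree
at most two would isolate it.
-/

section General

variable {V : Type*} {G : SimpleGraph V}

theorem preconnected_induce_union_of_exists_adj {s t : Set V} (hs : (G.induce s).Preconnected)
    (ht : (G.induce t).Preconnected)
    (hst : s.Nonempty → t.Nonempty → ∃ v ∈ s, ∃ w ∈ t, G.Adj v w) :
    (G.induce (s ∪ t)).Preconnected := by
  obtain rfl | hs_ne := s.eq_empty_or_nonempty
  · rwa [Set.empty_union]
  obtain rfl | ht_ne := t.eq_empty_or_nonempty
  · rwa [Set.union_empty]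
  obtain ⟨v, hv, w, hw, hvw⟩ := hst hs_ne ht_ne
  exact (SimpleGraph.connected_induce_union hs ht hv hw hvw).preconnected

theorem preconnected_induce_image_Ioo {f : ℕ → V} {a b : ℕ}
    (hf : ∀ i, a < i → i + 1 < b → G.Adj (f i) (f (i + 1))) :
    (G.induce (f '' Set.Ioo a b)).Preconnected := by
  induction b with
  | zero =>
    rw [Set.Ioo_eq_empty a.not_lt_zero, Set.image_empty]
    exact .of_subsingleton
  | succ b ih =>
    rw [Set.Ioo_add_one_right_eq_Ioc]
    obtain hba | hab := le_or_gt b a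
    · rw [Set.Ioc_eq_empty hba.not_gt, Set.image_empty]
      exact .of_subsingleton
    · rw [← Set.Ioo_insert_right hab, Set.image_insert_eq, Set.insert_eq, Set.union_comm]
      refine preconnected_induce_union_of_exists_adj (ih fun i hai hib => hf i hai (by omega))
        .of_subsingleton ?_
      rintro ⟨_, i, ⟨hai, hib⟩, -⟩ -
      refine ⟨f (b - 1), Set.mem_image_of_mem f ⟨by omega, by omega⟩, f b, rfl, ?_⟩
      simpa [Nat.sub_add_cancel (by omega : 1 ≤ b)] using hf (b - 1) (by omega) (by omega)

theorem threeConnected_of_forall_pair [Fintype V] (hV : 4 ≤ Fintype.card V)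
    (h : ∀ a b : V, a ≠ b → (G.induce {a, b}ᶜ).Preconnected) : ThreeConnected G := by
  classical
  intro S hS
  have hS_ne : (S : Set V)ᶜ.Nonempty := by
    obtain ⟨x, -, hx⟩ := Finset.exists_mem_notMem_of_card_lt_card
      (s := S) (t := Finset.univ) (by rw [Finset.card_univ]; omega)
    exact ⟨x, hx⟩
  refine (SimpleGraph.connected_iff _).mpr ⟨?_, hS_ne.to_subtype⟩
  rintro ⟨x, hx⟩ ⟨y, hy⟩
  obtain ⟨T, hST, hTxy, hT⟩ : ∃ T, S ⊆ T ∧ T ⊆ ({x, y} : Finset V)ᶜ ∧ T.card = 2 := by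
    refine Finset.exists_subsuperset_card_eq ?_ hS ?_
    · rw [Finset.subset_compl_comm]
      simpa [Finset.insert_subset_iff] using ⟨hx, hy⟩
    · have := Finset.card_le_two (a := x) (b := y)
      rw [Finset.card_compl]
      omega
  obtain ⟨a, b, hab, rfl⟩ := Finset.card_eq_two.mp hT
  have hxy : x ∈ ({a, b} : Set V)ᶜ ∧ y ∈ ({a, b} : Set V)ᶜ := by
    rw [Finset.subset_compl_comm, Finset.insert_subset_iff, Finset.singleton_subset_iff] at hTxy
    simpa using hTxy
  have hsub : ({a, b} : Set V)ᶜ ≤ (S : Set V)ᶜ :=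
    Set.compl_subset_compl.mpr (by simpa using Finset.coe_subset.mpr hST)
  exact (h a b hab ⟨x, hxy.1⟩ ⟨y, hxy.2⟩).map (SimpleGraph.induceHomOfLE G hsub).toHom

theorem ThreeConnected.three_le_degN [Fintype V] (hG : ThreeConnected G)
    (hV : 4 ≤ Fintype.card V) (v : V) : 3 ≤ degN G v := by
  classical
  by_contra! h_deg
  let N := (G.neighborSet v).toFinset
  have hN : N.card ≤ 2 := by
    rw [← Set.ncard_eq_toFinset_card']
    exact Nat.le_of_lt_succ h_deg
  have hv : v ∈ (N : Set V)ᶜ := by simp [N]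
  obtain ⟨w, -, hw⟩ := Finset.exists_mem_notMem_of_card_lt_card
    (s := insert v N) (t := Finset.univ) (by
      have := Finset.card_insert_le v N
      rw [Finset.card_univ]
      omega)
  rw [Finset.mem_insert, not_or] at hw
  have : Nontrivial ↥(N : Set V)ᶜ :=
    ⟨⟨v, hv⟩, ⟨w, hw.2⟩, fun h => hw.1 (congrArg Subtype.val h).symm⟩
  obtain ⟨⟨u, hu⟩, hvu⟩ := (hG N hN).preconnected.exists_adj_of_nontrivial ⟨v, hv⟩
  exact hu (by simpa [N] using hvu)

end General

section Cycle

variable {n : ℕ}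

theorem natCast_zmod_ne_of_lt_add {i j : ℕ} (hij : i < j) (hji : j < i + n) :
    (i : ZMod n) ≠ j := fun h =>
  hji.not_ge (((ZMod.natCast_eq_natCast_iff i j n).mp h).add_le_of_lt hij)

/-- The open arc of the cycle on `ZMod n` running upwards from `a` to `b`. Endpoints are natural
numbers, so that an arc passing through `0` is written with `b ≥ n`. -/
def openArc (n a b : ℕ) : Set (ZMod n) :=
  (Nat.cast : ℕ → ZMod n) '' Set.Ioo a b

theorem compl_pair_eq_openArc_union [NeZero n] {a b : ℕ} (hab : a < b) (hb : b < n) :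
    ({(a : ZMod n), (b : ZMod n)} : Set (ZMod n))ᶜ = openArc n a b ∪ openArc n b (a + n) := by
  ext v
  constructor
  · obtain ⟨i, hi, rfl⟩ : ∃ i < n, (i : ZMod n) = v := ⟨v.val, v.val_lt, v.natCast_zmod_val⟩
    intro hv
    have hia : i ≠ a := by rintro rfl; simp at hv
    have hib : i ≠ b := by rintro rfl; simp at hv
    obtain h_lt | h_mem | h_gt : i < a ∨ (a < i ∧ i < b) ∨ b < i := by omega
    · exact .inr ⟨i + n, ⟨by omega, by omega⟩, by simp⟩
    · exact .inl ⟨i, h_mem, rfl⟩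
    · exact .inr ⟨i, ⟨h_gt, by omega⟩, rfl⟩
  · rintro (⟨i, ⟨hai, hib⟩, rfl⟩ | ⟨i, ⟨hbi, hia⟩, rfl⟩) (h | h)
    · exact natCast_zmod_ne_of_lt_add hai (by omega) h.symm
    · exact natCast_zmod_ne_of_lt_add hib (by omega) h
    · exact natCast_zmod_ne_of_lt_add (by omega) hia h.symm
    · exact natCast_zmod_ne_of_lt_add hbi (by omega) h.symm

theorem threeConnected_of_forall_exists_adj_openArc [NeZero n] (hn : 4 ≤ n)
    {G : SimpleGraph (ZMod n)} (h_cycle : ∀ i : ZMod n, G.Adj i (i + 1))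
    (h_cross : ∀ a b : ℕ, a + 1 < b → b < n → b + 1 < a + n →
      ∃ v ∈ openArc n a b, ∃ w ∈ openArc n b (a + n), G.Adj v w) :
    ThreeConnected G := by
  have h_arc (a b : ℕ) : (G.induce (openArc n a b)).Preconnected :=
    preconnected_induce_image_Ioo fun i _ _ => by simpa using h_cycle i
  have h_lt (a b : ℕ) (hab : a < b) (hb : b < n) :
      (G.induce {(a : ZMod n), (b : ZMod n)}ᶜ).Preconnected := by
    rw [compl_pair_eq_openArc_union hab hb]
    refine preconnected_induce_union_of_exists_adj (h_arc _ _) (h_arc _ _) ?_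
    rintro ⟨_, i, ⟨hai, hib⟩, -⟩ ⟨_, j, ⟨hbj, hja⟩, -⟩
    exact h_cross a b (by omega) hb (by omega)
  refine threeConnected_of_forall_pair (by rwa [ZMod.card]) fun u v huv => ?_
  rw [← u.natCast_zmod_val, ← v.natCast_zmod_val]
  obtain h | h := lt_or_gt_of_ne ((ZMod.val_injective n).ne huv)
  · exact h_lt _ _ h v.val_lt
  · rw [Set.pair_comm]
    exact h_lt _ _ h u.val_lt

end Cycle

/-- The augmentation of the path `1, 2, …, n` with `n` written as `0`: the closed-up cycle, the
chords from `i` to `i + ⌊n/2⌋`, and the extra chord `{0, ⌊n/2⌋ + 1}`. It is meant for odd `n`;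
for even `n` the chord at `i = n/2` is `{n/2, 0}`. -/
def pathAugmentation (n : ℕ) : SimpleGraph (ZMod n) :=
  SimpleGraph.fromEdgeSet
    ({e | ∃ i : ZMod n, e = s(i, i + 1)} ∪
      {e | ∃ i : ℕ, 1 ≤ i ∧ i ≤ n / 2 ∧
        e = s((i : ZMod n), (i : ZMod n) + ((n / 2 : ℕ) : ZMod n))} ∪
      {s((0 : ZMod n), ((n / 2 : ℕ) : ZMod n) + 1)})

namespace pathAugmentation

variable {n : ℕ}

theorem adj_add_one (hn : 2 ≤ n) (i : ZMod n) : (pathAugmentation n).Adj i (i + 1) := by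
  have : Fact (1 < n) := ⟨hn⟩
  exact ⟨.inl (.inl ⟨i, rfl⟩), by simp⟩

theorem adj_chord {i j : ℕ} (hi : 1 ≤ i) (him : i ≤ n / 2) (hij : i + n / 2 = j) :
    (pathAugmentation n).Adj (i : ZMod n) j := by
  subst hij
  exact ⟨.inl (.inr ⟨i, hi, him, by rw [Nat.cast_add]⟩),
    natCast_zmod_ne_of_lt_add (by omega) (by omega)⟩

theorem adj_zero (hn : 3 ≤ n) :
    (pathAugmentation n).Adj (0 : ZMod n) ((n / 2 + 1 : ℕ) : ZMod n) := by
  refine ⟨.inr (by simp), ?_⟩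
  exact_mod_cast natCast_zmod_ne_of_lt_add (n := n) (i := 0) (by omega) (by omega)

theorem exists_adj_openArc (hn : 4 ≤ n) {a b : ℕ} (hab : a + 1 < b) (hb : b < n)
    (hba : b + 1 < a + n) :
    ∃ v ∈ openArc n a b, ∃ w ∈ openArc n b (a + n), (pathAugmentation n).Adj v w := by
  suffices ∃ s ∈ Set.Ioo a b, ∃ t ∈ Set.Ioo b (a + n), (pathAugmentation n).Adj (s : ZMod n) t by
    obtain ⟨s, hs, t, ht, hst⟩ := this
    exact ⟨s, ⟨s, hs, rfl⟩, t, ⟨t, ht, rfl⟩, hst⟩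
  obtain rfl | ha := Nat.eq_zero_or_pos a
  · obtain hbm | hbm := le_or_gt b (n / 2)
    · exact ⟨1, ⟨by omega, by omega⟩, 1 + n / 2, ⟨by omega, by omega⟩,
        adj_chord (by omega) (by omega) rfl⟩
    · exact ⟨n - 1 - n / 2, ⟨by omega, by omega⟩, n - 1, ⟨by omega, by omega⟩,
        adj_chord (by omega) (by omega) (by omega)⟩
  obtain hbm | hbm := le_or_gt b (n / 2 + 1)
  · exact ⟨a + 1, ⟨by omega, by omega⟩, a + 1 + n / 2, ⟨by omega, by omega⟩,
      adj_chord (by omega) (by omega) rfl⟩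
  obtain ham | ham := lt_or_ge a (n / 2 + 1)
  · exact ⟨n / 2 + 1, ⟨by omega, by omega⟩, n, ⟨by omega, by omega⟩,
      by simpa using (adj_zero (by omega)).symm⟩
  · refine ⟨a + 1, ⟨by omega, by omega⟩, a + 1 - n / 2 + n, ⟨by omega, by omega⟩, ?_⟩
    rw [Nat.cast_add _ n, ZMod.natCast_self, add_zero]
    exact (adj_chord (by omega) (by omega) (by omega)).symm

theorem threeConnected [NeZero n] (hn : 4 ≤ n) : ThreeConnected (pathAugmentation n) :=
  threeConnected_of_forall_exists_adj_openArc hn (adj_add_one (by omega))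
    fun _ _ => exists_adj_openArc hn

end pathAugmentation

theorem odd_path_augmentation_graph_three_connected_general (n : ℕ) [NeZero n] (hn : 4 ≤ n) :
    ThreeConnected (pathAugmentation n) ∧ ∀ v : ZMod n, 3 ≤ degN (pathAugmentation n) v :=
  have h := pathAugmentation.threeConnected hn
  ⟨h, h.three_le_degN (by rwa [ZMod.card])⟩

/-- For odd `n ≥ 5`, the graph on `ZMod n` consisting of the `n`-cycle edges
`{i, i+1}`, the chords `{i, i + ⌊n/2⌋}` for `1 ≤ i ≤ ⌊n/2⌋`, and the extra chord
`{0, ⌊n/2⌋ + 1}` is 3-vertex-connected and has minimum degree at least 3. -/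
theorem odd_path_augmentation_graph_three_connected
    (n : ℕ) [NeZero n] (hn : 5 ≤ n) (hodd : Odd n)
    (H : SimpleGraph (ZMod n))
    (hH : ∀ u v : ZMod n, H.Adj u v ↔ u ≠ v ∧
      (s(u, v) ∈ ({e | ∃ i : ZMod n, e = s(i, i + 1)} ∪
        {e | ∃ i : ℕ, 1 ≤ i ∧ i ≤ n / 2 ∧
          e = s((i : ZMod n), (i : ZMod n) + ((n / 2 : ℕ) : ZMod n))} ∪
        {s((0 : ZMod n), ((n / 2 : ℕ) : ZMod n) + 1)} : Set (Sym2 (ZMod n))))) :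
    ThreeConnected H ∧ ∀ v : ZMod n, 3 ≤ degN H v := by
  obtain rfl : H = pathAugmentation n := by ext u v; exact (hH u v).trans and_comm
  exact odd_path_augmentation_graph_three_connected_general n (by omega)
end
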